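/- Fix a real constant D > 0 and reals n_h, n_v ≥ 4, and define G(α) = (2α − α²)/l̄(n_h, n_v, α) for α ∈ [0, 1]. Then G is differentiable at α = 0 and at α = 1, with G′(0) = 2/l̄(n_h, n_v, 0) > 0 and G′(1) = −2D·(n_h² + n_v² + 1)/(3(n_h + n_v)·l̄(n_h, n_v, 1)²) < 0. -/

import Mathlib

/-- Average travel distance of a sorting task. -/
noncomputable def lbar (D nh nv α : ℝ) : ℝ :=
  2 * D * ((nh^2 + nv^2) / (nh + nv) * ((-α^4 - 5*α^2 + 18*α) / 12)
    + nh * nv / (nh + nv) * ((-α^2 + 2*α) / 4)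
    + (3*α^3 - α^2 - 3*α - 5) / (12 * (nh + nv))
    + (nh + nv) * ((α^2 - 2*α + 1) / 2)
    + (-α^2 + 2*α) / 2)

/-!
The numerator `2α - α² = 1 - (1 - α)²` vanishes at `0` and has a critical point at `1`. One of the
two terms of the quotient rule therefore drops out at each endpoint: `G'(0) = 2 / l̄(0)` whatever
the slope of `l̄`, and `G'(1) = -l̄'(1) / l̄(1)²`. Hence `G` decreases at `1` because `l̄`
increases there.
-/

section QuotientRule

variable {𝕜 : Type*} [NontriviallyNormedField 𝕜] {f g : 𝕜 → 𝕜} {f' g' x : 𝕜}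

theorem hasDerivAt_div_of_eq_zero (hf : HasDerivAt f f' x) (hfx : f x = 0)
    (hg : ContinuousAt g x) (hgx : g x ≠ 0) :
    HasDerivAt (fun y ↦ f y / g y) (f' / g x) x := by
  rw [hasDerivAt_iff_tendsto_slope] at hf ⊢
  refine (hf.div (hg.tendsto.mono_left nhdsWithin_le_nhds) hgx).congr fun y ↦ ?_
  simp only [Pi.div_apply, slope_def_field, hfx, zero_div, sub_zero, div_right_comm]

theorem hasDerivAt_div_of_deriv_eq_zero (hf : HasDerivAt f 0 x) (hg : HasDerivAt g g' x)
    (hgx : g x ≠ 0) :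
    HasDerivAt (fun y ↦ f y / g y) (-(f x * g') / g x ^ 2) x :=
  (hf.fun_div hg hgx).congr_deriv (by rw [zero_mul, zero_sub])

theorem hasDerivAt_two_mul_sub_sq (x : 𝕜) : HasDerivAt (fun y ↦ 2 * y - y ^ 2) (2 - 2 * x) x := by
  simpa using ((hasDerivAt_id' x).const_mul 2).fun_sub (hasDerivAt_pow 2 x)

end QuotientRule

section AverageDistance

variable {D nh nv : ℝ}

theorem hasDerivAt_lbar (D nh nv x : ℝ) :
    HasDerivAt (lbar D nh nv)
      (2 * D * ((nh ^ 2 + nv ^ 2) / (nh + nv) * ((-(4 * x ^ 3) - 10 * x + 18) / 12)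
        + nh * nv / (nh + nv) * ((-(2 * x) + 2) / 4)
        + (9 * x ^ 2 - 2 * x - 3) / (12 * (nh + nv))
        + (nh + nv) * ((2 * x - 2) / 2)
        + (-(2 * x) + 2) / 2)) x := by
  have hid := hasDerivAt_id' x
  have hsq := hasDerivAt_pow 2 x
  have hcube := hasDerivAt_pow 3 x
  have hquartic : HasDerivAt (fun α ↦ (-α ^ 4 - 5 * α ^ 2 + 18 * α) / 12)
      ((-(4 * x ^ 3) - 10 * x + 18) / 12) x :=
    ((((hasDerivAt_pow 4 x).fun_neg.fun_sub (hsq.const_mul 5)).fun_add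
      (hid.const_mul 18)).div_const 12).congr_deriv (by norm_num; ring)
  have hcubic : HasDerivAt (fun α ↦ 3 * α ^ 3 - α ^ 2 - 3 * α - 5) (9 * x ^ 2 - 2 * x - 3) x :=
    ((((hcube.const_mul 3).fun_sub hsq).fun_sub (hid.const_mul 3)).sub_const 5).congr_deriv
      (by norm_num; ring)
  have hbump : HasDerivAt (fun α ↦ -α ^ 2 + 2 * α) (-(2 * x) + 2) x :=
    (hsq.fun_neg.fun_add (hid.const_mul 2)).congr_deriv (by norm_num)
  have hsquare : HasDerivAt (fun α ↦ α ^ 2 - 2 * α + 1) (2 * x - 2) x :=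
    ((hsq.fun_sub (hid.const_mul 2)).add_const 1).congr_deriv (by norm_num)
  exact (((((hquartic.const_mul _).fun_add ((hbump.div_const 4).const_mul _)).fun_add
    (hcubic.div_const _)).fun_add ((hsquare.div_const 2).const_mul _)).fun_add
    (hbump.div_const 2)).const_mul (2 * D)

theorem hasDerivAt_lbar_one (D nh nv : ℝ) :
    HasDerivAt (lbar D nh nv) (2 * D * (nh ^ 2 + nv ^ 2 + 1) / (3 * (nh + nv))) 1 :=
  (hasDerivAt_lbar D nh nv 1).congr_deriv <| by
    -- `ring` factors `(c * s)⁻¹` only when `s` is an atom, not a sum.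
    generalize nh + nv = s
    ring

theorem lbar_zero (D : ℝ) (hs : nh + nv ≠ 0) :
    lbar D nh nv 0 = D * (6 * (nh + nv) ^ 2 - 5) / (6 * (nh + nv)) := by
  unfold lbar
  field

theorem lbar_one (D : ℝ) (hs : nh + nv ≠ 0) :
    lbar D nh nv 1 =
      D * (4 * (nh ^ 2 + nv ^ 2) + nh * nv + 2 * (nh + nv) - 2) / (2 * (nh + nv)) := by
  unfold lbar
  field

theorem lbar_zero_pos (hD : 0 < D) (hs : 1 ≤ nh + nv) : 0 < lbar D nh nv 0 := by
  have hnum : 0 < 6 * (nh + nv) ^ 2 - 5 := by nlinarith only [hs]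
  rw [lbar_zero D (by positivity)]
  positivity

theorem lbar_one_pos (hD : 0 < D) (hs : 1 ≤ nh + nv) : 0 < lbar D nh nv 1 := by
  have hquad : 0 < 4 * (nh ^ 2 + nv ^ 2) + nh * nv := calc
    0 < 9 / 4 * (nh + nv) ^ 2 + 7 / 4 * (nh - nv) ^ 2 := by positivity
    _ = 4 * (nh ^ 2 + nv ^ 2) + nh * nv := by ring
  have hnum : 0 < 4 * (nh ^ 2 + nv ^ 2) + nh * nv + 2 * (nh + nv) - 2 := by linarith
  rw [lbar_one D (by positivity)]
  positivity

end AverageDistance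

section Throughput

variable {D nh nv : ℝ}

theorem hasDerivAt_throughput_zero (h : lbar D nh nv 0 ≠ 0) :
    HasDerivAt (fun α ↦ (2 * α - α ^ 2) / lbar D nh nv α) (2 / lbar D nh nv 0) 0 := by
  have hnum : HasDerivAt (fun α : ℝ ↦ 2 * α - α ^ 2) 2 0 := by
    simpa using hasDerivAt_two_mul_sub_sq (0 : ℝ)
  exact hasDerivAt_div_of_eq_zero hnum (by norm_num) (hasDerivAt_lbar D nh nv 0).continuousAt h

theorem hasDerivAt_throughput_one (h : lbar D nh nv 1 ≠ 0) :
    HasDerivAt (fun α ↦ (2 * α - α ^ 2) / lbar D nh nv α)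
      (-(2 * D * (nh ^ 2 + nv ^ 2 + 1)) / (3 * (nh + nv) * lbar D nh nv 1 ^ 2)) 1 := by
  have hnum : HasDerivAt (fun α : ℝ ↦ 2 * α - α ^ 2) 0 1 := by
    simpa using hasDerivAt_two_mul_sub_sq (1 : ℝ)
  refine (hasDerivAt_div_of_deriv_eq_zero hnum (hasDerivAt_lbar_one D nh nv) h).congr_deriv ?_
  generalize nh + nv = s
  ring

end Throughput

theorem G_deriv_endpoints_general (D nh nv : ℝ) (hD : 0 < D) (hs : 1 ≤ nh + nv) :
    DifferentiableAt ℝ (fun α ↦ (2 * α - α ^ 2) / lbar D nh nv α) 0 ∧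
    deriv (fun α ↦ (2 * α - α ^ 2) / lbar D nh nv α) 0 = 2 / lbar D nh nv 0 ∧
    0 < deriv (fun α ↦ (2 * α - α ^ 2) / lbar D nh nv α) 0 ∧
    DifferentiableAt ℝ (fun α ↦ (2 * α - α ^ 2) / lbar D nh nv α) 1 ∧
    deriv (fun α ↦ (2 * α - α ^ 2) / lbar D nh nv α) 1 =
      -(2 * D * (nh ^ 2 + nv ^ 2 + 1)) / (3 * (nh + nv) * lbar D nh nv 1 ^ 2) ∧
    deriv (fun α ↦ (2 * α - α ^ 2) / lbar D nh nv α) 1 < 0 := by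
  have hl₀ := lbar_zero_pos hD hs
  have hl₁ := lbar_one_pos hD hs
  have hG₀ := hasDerivAt_throughput_zero hl₀.ne'
  have hG₁ := hasDerivAt_throughput_one hl₁.ne'
  refine ⟨hG₀.differentiableAt, hG₀.deriv, ?_, hG₁.differentiableAt, hG₁.deriv, ?_⟩
  · rw [hG₀.deriv]
    positivity
  · rw [hG₁.deriv]
    exact div_neg_of_neg_of_pos (neg_lt_zero.mpr (by positivity)) (by positivity)

theorem G_deriv_endpoints
    (D nh nv : ℝ) (hD : 0 < D) (hnh : 4 ≤ nh) (hnv : 4 ≤ nv) :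
    DifferentiableAt ℝ (fun α => (2*α - α^2) / lbar D nh nv α) 0 ∧
    deriv (fun α => (2*α - α^2) / lbar D nh nv α) 0 = 2 / lbar D nh nv 0 ∧
    0 < deriv (fun α => (2*α - α^2) / lbar D nh nv α) 0 ∧
    DifferentiableAt ℝ (fun α => (2*α - α^2) / lbar D nh nv α) 1 ∧
    deriv (fun α => (2*α - α^2) / lbar D nh nv α) 1 =
      -(2 * D * (nh^2 + nv^2 + 1)) / (3 * (nh + nv) * (lbar D nh nv 1)^2) ∧
    deriv (fun α => (2*α - α^2) / lbar D nh nv α) 1 < 0 :=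
  G_deriv_endpoints_general D nh nv hD (by linarith)
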